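/- Fix a pmf p on 𝒳ⁿ with p(xⁿ) > 0 for all xⁿ, λ ≥ 0 and a distortion function d: 𝒳ⁿ×𝒳̂ⁿ→[0,∞). Consider the Blahut–Arimoto-type iteration started from the uniform causal conditioning pmf q⁰(x̂ⁿ||x^{n−1}) = |𝒳̂|^{−n}: for k ≥ 1, r^k(x̂ⁿ|xⁿ) = q^{k−1}(x̂ⁿ||x^{n−1})2^{−λd(xⁿ,x̂ⁿ)} / Σ_{x̂ⁿ} q^{k−1}(x̂ⁿ||x^{n−1})2^{−λd(xⁿ,x̂ⁿ)}, with q^k the causal conditioning pmf induced by p·r^k. Then, with K(r,q) = I_FF(r,q) + λ·Σ_{xⁿ,x̂ⁿ} p(xⁿ)r(x̂ⁿ|xⁿ)d(xⁿ,x̂ⁿ), the iterates satisfy lim_{k→∞} K(r^k,q^k) = min over conditional pmfs r of [ I(X̂ⁿ→Xⁿ) + λ·Σ_{xⁿ,x̂ⁿ} p(xⁿ)r(x̂ⁿ|xⁿ)d(xⁿ,x̂ⁿ) ]. -/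

import Mathlib

open scoped BigOperators
open Filter

noncomputable section

namespace FFRD

variable {X Y : Type} [Fintype X] [DecidableEq X] [Fintype Y] [DecidableEq Y] {n : ℕ}

/-- `p` is a probability mass function on a finite type. -/
def IsPMF {α : Type} [Fintype α] (p : α → ℝ) : Prop :=
  (∀ a, 0 ≤ p a) ∧ ∑ a, p a = 1

/-- `r` is a conditional pmf on `Fin n → Y` given `Fin n → X`. -/
def IsCondPMF (r : (Fin n → X) → (Fin n → Y) → ℝ) : Prop :=
  (∀ x y, 0 ≤ r x y) ∧ ∀ x, ∑ y, r x y = 1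

/-- The causal conditioning pmf `q_r(ŷⁿ‖x^{n-1})` induced by the joint pmf `p(x)·r(y|x)`:
the product over `i` of the conditional probabilities `P(y_i | y^{i-1}, x^{i-1})`. -/
def causalCond (p : (Fin n → X) → ℝ) (r : (Fin n → X) → (Fin n → Y) → ℝ)
    (x : Fin n → X) (y : Fin n → Y) : ℝ :=
  ∏ i : Fin n,
    ((∑ x' : Fin n → X, ∑ y' : Fin n → Y,
        if (∀ j, j < i → x' j = x j) ∧ (∀ j, j ≤ i → y' j = y j)
        then p x' * r x' y' else 0) /
      (∑ x' : Fin n → X, ∑ y' : Fin n → Y,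
        if (∀ j, j < i → x' j = x j) ∧ (∀ j, j < i → y' j = y j)
        then p x' * r x' y' else 0))

/-- Directed information `I(X̂ⁿ → Xⁿ)` computed from source pmf `p` and conditional pmf `r`. -/
def directedInfo (p : (Fin n → X) → ℝ) (r : (Fin n → X) → (Fin n → Y) → ℝ) : ℝ :=
  ∑ x, ∑ y, p x * r x y * Real.logb 2 (r x y / causalCond p r x y)

/-- The `n`-th order rate distortion function with feed-forward. -/
def Rn (n : ℕ) (p : (Fin n → X) → ℝ) (d : (Fin n → X) → (Fin n → Y) → ℝ) (D : ℝ) : ℝ :=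
  (1 / (n : ℝ)) *
    sInf {v | ∃ r : (Fin n → X) → (Fin n → Y) → ℝ, IsCondPMF r ∧
      (∑ x, ∑ y, p x * r x y * d x y) ≤ D ∧ v = directedInfo p r}

/-- Left shift on sequences. -/
def shift (X : Type) : (ℕ → X) → (ℕ → X) := fun ω k => ω (k + 1)

/-- The law of the first `n` coordinates under `μ`. -/
def lawFin [MeasurableSpace X] (μ : MeasureTheory.Measure (ℕ → X)) (n : ℕ)
    (x : Fin n → X) : ℝ :=
  (μ {ω | ∀ i : Fin n, ω (i : ℕ) = x i}).toReal

/-- Per-letter distortion extended to blocks of length `L`. -/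
def dBlock (d0 : X → Y → ℝ) (L : ℕ) (x : Fin L → X) (y : Fin L → Y) : ℝ :=
  (1 / (L : ℝ)) * ∑ i, d0 (x i) (y i)

end FFRD

namespace FFRD

/-- `q` is a causal conditioning pmf `q(x̂ⁿ‖x^{n−1}) = ∏ᵢ qᵢ(x̂ᵢ | x̂^{i−1}, x^{i−1})`,
where each factor is a pmf on `Y` depending only on the strict pasts of `x` and `y`. -/
def IsCausalCondKernel {X Y : Type} [Fintype X] [Fintype Y] {n : ℕ}
    (q : (Fin n → X) → (Fin n → Y) → ℝ) : Prop :=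
  ∃ qi : Fin n → (Fin n → X) → (Fin n → Y) → Y → ℝ,
    (∀ i x y, (∀ b, 0 ≤ qi i x y b) ∧ ∑ b, qi i x y b = 1) ∧
    (∀ i x x' y y', (∀ j, j < i → x j = x' j) → (∀ j, j < i → y j = y' j) →
      qi i x y = qi i x' y') ∧
    (∀ x y, q x y = ∏ i, qi i x y (y i))

/-- `I_FF(r, q) = Σ_{xⁿ,x̂ⁿ} p(xⁿ) r(x̂ⁿ|xⁿ) log₂ ( r(x̂ⁿ|xⁿ) / q(x̂ⁿ‖x^{n−1}) )`. -/
def IFF {X Y : Type} [Fintype X] [Fintype Y] {n : ℕ} (p : (Fin n → X) → ℝ)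
    (r q : (Fin n → X) → (Fin n → Y) → ℝ) : ℝ :=
  ∑ x, ∑ y, p x * r x y * Real.logb 2 (r x y / q x y)

end FFRD

/-!
Write `P = p · r` for the joint pmf of a conditional pmf `r`. It factors as
`P(xⁿ, x̂ⁿ) = P(x̂ⁿ‖xⁿ⁻¹) · P(xⁿ‖x̂ⁿ)` into a forward and a backward causal conditioning kernel, and
the product of the forward kernel of one joint pmf with the backward kernel of another has total
mass at most one. With `D` the relative entropy and `K` the Lagrangian, this gives three identities:

* `K(r, q) = K(tilt q, q) + D(p r ‖ p tilt q)`, where `tilt q` is the first half of the iteration;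
* `K(r, q) = K(r, q_r) + D(P ‖ q · backward P)`;
* `D(P ‖ Q) = D(P ‖ forward Q · backward P) + D(P ‖ forward P · backward Q)`.

The first two show that both half steps decrease `K`. Combining all three for an arbitrary
competitor `r` bounds the excess `K(tilt q, q) - K(r, q_r)` by the decrease of the potential
`D(P ‖ q · backward P)` during one iteration. The potential is nonnegative, so the excesses have
bounded partial sums and the monotone limit of `K` cannot lie above any `K(r, q_r)`.
-/

namespace FFRD

section Limit

lemma tendsto_sInf_of_sub_le_potential_sub {u : ℕ → ℝ} {S : Set ℝ} (hu : Antitone u)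
    (hS : BddBelow S) (hmem : ∀ k, u k ∈ S)
    (hpot : ∀ v ∈ S, ∃ A : ℕ → ℝ, (∀ k, 0 ≤ A k) ∧ ∀ k, u k - v ≤ A k - A (k + 1)) :
    Tendsto u atTop (nhds (sInf S)) := by
  have hbdd : BddBelow (Set.range u) := hS.mono (Set.range_subset_iff.2 hmem)
  have hle : ∀ v ∈ S, ⨅ k, u k ≤ v := by
    intro v hv
    obtain ⟨A, hA, hstep⟩ := hpot v hv
    have hpartial (m : ℕ) : m • ((⨅ k, u k) - v) ≤ A 0 := calc
      m • ((⨅ k, u k) - v) = ∑ _k ∈ Finset.range m, ((⨅ k, u k) - v) := by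
        rw [Finset.sum_const, Finset.card_range]
      _ ≤ ∑ k ∈ Finset.range m, (A k - A (k + 1)) := Finset.sum_le_sum fun k _ =>
        (sub_le_sub_right (ciInf_le hbdd k) v).trans (hstep k)
      _ = A 0 - A m := Finset.sum_range_sub' A m
      _ ≤ A 0 := sub_le_self _ (hA m)
    by_contra! hlt
    obtain ⟨m, hm⟩ := exists_lt_nsmul (sub_pos.2 hlt) (A 0)
    exact (hpartial m).not_gt hm
  have hglb : IsGLB S (⨅ k, u k) := ⟨hle, fun w hw => le_ciInf fun k => hw (hmem k)⟩
  rw [hglb.csInf_eq ⟨_, hmem 0⟩]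
  exact tendsto_atTop_ciInf hu hbdd

end Limit

section RelEntropy

variable {α β : Type*} [Fintype α] [Fintype β] {P Q : α → β → ℝ}

/-- The relative entropy `D(P ‖ Q)`, in bits, of two nonnegative weights on `α × β`. It is the
usual one only if `Q` is positive on the support of `P`, since `P / 0 = 0` and `log 0 = 0`. -/
def relEntropy (P Q : α → β → ℝ) : ℝ :=
  ∑ a, ∑ b, P a b * Real.logb 2 (P a b / Q a b)

lemma relEntropy_self (P : α → β → ℝ) : relEntropy P P = 0 := by
  refine Finset.sum_eq_zero fun a _ => Finset.sum_eq_zero fun b _ => ?_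
  rcases eq_or_ne (P a b) 0 with h | h <;> simp [h]

lemma sub_le_mul_log_div {s t : ℝ} (hs : 0 ≤ s) (ht : 0 ≤ t) (hst : 0 < s → 0 < t) :
    s - t ≤ s * Real.log (s / t) := by
  rcases hs.eq_or_lt with rfl | hs
  · simpa using ht
  · calc s - t = s * (1 - (s / t)⁻¹) := by field_simp
      _ ≤ s * Real.log (s / t) := mul_le_mul_of_nonneg_left
        (Real.one_sub_inv_le_log_of_pos (div_pos hs (hst hs))) hs.le

lemma relEntropy_nonneg (hP : ∀ a b, 0 ≤ P a b) (hQ : ∀ a b, 0 ≤ Q a b)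
    (hPQ : ∀ a b, 0 < P a b → 0 < Q a b) (hmass : ∑ a, ∑ b, Q a b ≤ ∑ a, ∑ b, P a b) :
    0 ≤ relEntropy P Q := by
  have hlog : relEntropy P Q = (∑ a, ∑ b, P a b * Real.log (P a b / Q a b)) / Real.log 2 := by
    simp only [relEntropy, Real.logb, Finset.sum_div, mul_div_assoc]
  rw [hlog]
  refine div_nonneg ?_ (Real.log_nonneg one_le_two)
  calc 0 ≤ ∑ a, ∑ b, (P a b - Q a b) := by simpa using hmass
    _ ≤ _ := Finset.sum_le_sum fun a _ => Finset.sum_le_sum fun b _ =>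
      sub_le_mul_log_div (hP a b) (hQ a b) (hPQ a b)

end RelEntropy

section CausalProduct

variable {n : ℕ}

lemma sum_prod_le_one {α : Type*} [Fintype α] {g : Fin n → (Fin n → α) → ℝ}
    (hg : ∀ i z, 0 ≤ g i z) (hdep : ∀ i, DependsOn (g i) (Set.Iic i))
    (hsum : ∀ i z, ∑ c, g i (Function.update z i c) ≤ 1) :
    ∑ z, ∏ i, g i z ≤ 1 := by
  induction n with
  | zero => simp
  | succ n ih =>
    rcases isEmpty_or_nonempty α with _ | ⟨⟨z₀⟩⟩
    · simp
    have hhead (c : α) (z : Fin n → α) :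
        g 0 (Fin.cons c z) = g 0 (Function.update (fun _ => z₀) 0 c) := by
      refine hdep 0 fun j hj => ?_
      obtain rfl : j = 0 := by simpa using hj
      simp
    have htail (c : α) : ∑ z : Fin n → α, ∏ i : Fin n, g i.succ (Fin.cons c z) ≤ 1 := by
      refine ih (fun i z => hg _ _) (fun i z z' h => hdep _ fun j hj => ?_) (fun i z => ?_)
      · cases j using Fin.cases with
        | zero => rfl
        | succ j => simpa using h j (by simpa using hj)
      · simpa only [Fin.cons_update] using hsum i.succ (Fin.cons c z)
    calc ∑ z, ∏ i, g i z
        = ∑ c, ∑ z : Fin n → α, ∏ i, g i (Fin.cons c z) := by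
          rw [← (Fin.consEquiv fun _ => α).sum_comp, Fintype.sum_prod_type]
          rfl
      _ = ∑ c, g 0 (Function.update (fun _ => z₀) 0 c) *
            ∑ z : Fin n → α, ∏ i : Fin n, g i.succ (Fin.cons c z) := by
          simp only [Fin.prod_univ_succ, hhead, Finset.mul_sum]
      _ ≤ ∑ c, g 0 (Function.update (fun _ => z₀) 0 c) :=
          Finset.sum_le_sum fun c _ => mul_le_of_le_one_right (hg _ _) (htail c)
      _ ≤ 1 := hsum 0 _

variable {X Y : Type*} [Fintype X] [Fintype Y]

lemma sum_prod_mul_prod_le_one {a b : Fin n → (Fin n → X) → (Fin n → Y) → ℝ}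
    (ha : ∀ i x y, 0 ≤ a i x y) (hb : ∀ i x y, 0 ≤ b i x y)
    (hax : ∀ i y, DependsOn (a i · y) (Set.Iio i)) (hay : ∀ i x, DependsOn (a i x) (Set.Iic i))
    (hbx : ∀ i y, DependsOn (b i · y) (Set.Iic i)) (hby : ∀ i x, DependsOn (b i x) (Set.Iic i))
    (hasum : ∀ i x y, ∑ c, a i x (Function.update y i c) ≤ 1)
    (hbsum : ∀ i x y, ∑ c, b i (Function.update x i c) y ≤ 1) :
    ∑ x, ∑ y, (∏ i, a i x y) * ∏ i, b i x y ≤ 1 := by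
  let g (i : Fin n) (z : Fin n → X × Y) : ℝ :=
    a i (Prod.fst ∘ z) (Prod.snd ∘ z) * b i (Prod.fst ∘ z) (Prod.snd ∘ z)
  have hdep (i : Fin n) : DependsOn (g i) (Set.Iic i) := by
    intro z z' h
    have hfst : ∀ j ∈ Set.Iic i, (Prod.fst ∘ z) j = (Prod.fst ∘ z') j :=
      fun j hj => congrArg Prod.fst (h j hj)
    have hsnd : ∀ j ∈ Set.Iic i, (Prod.snd ∘ z) j = (Prod.snd ∘ z') j :=
      fun j hj => congrArg Prod.snd (h j hj)
    exact congrArg₂ (· * ·)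
      ((hax i _ fun j hj => hfst j (Set.Iio_subset_Iic_self hj)).trans (hay i _ hsnd))
      ((hbx i _ hfst).trans (hby i _ hsnd))
  have hsum (i : Fin n) (z : Fin n → X × Y) : ∑ c, g i (Function.update z i c) ≤ 1 := by
    have hpast (c : X) (y : Fin n → Y) :
        a i (Function.update (Prod.fst ∘ z) i c) y = a i (Prod.fst ∘ z) y :=
      hax i y fun j hj => Function.update_of_ne (ne_of_lt hj) _ _
    simp only [g, Function.comp_update, hpast, Fintype.sum_prod_type_right, ← Finset.mul_sum]
    exact (Finset.sum_le_sum fun c _ => mul_le_of_le_one_right (ha _ _ _) (hbsum _ _ _)).trans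
      (hasum i _ _)
  calc ∑ x, ∑ y, (∏ i, a i x y) * ∏ i, b i x y
      = ∑ z, ∏ i, g i z := by
        rw [← (Equiv.arrowProdEquivProdArrow (Fin n) (fun _ => X) fun _ => Y).symm.sum_comp,
          Fintype.sum_prod_type]
        simp only [g, Finset.prod_mul_distrib]
        rfl
    _ ≤ 1 := sum_prod_le_one (fun i z => mul_nonneg (ha _ _ _) (hb _ _ _)) hdep hsum

end CausalProduct

section Cylinder

variable {n : ℕ} {α : Type*} [Fintype α] [DecidableEq α]

/-- The sequences that agree with `z` in the first `m` letters. -/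
def cylinder (m : ℕ) (z : Fin n → α) : Finset (Fin n → α) :=
  {z' | ∀ j : Fin n, (j : ℕ) < m → z' j = z j}

lemma mem_cylinder {m : ℕ} {z z' : Fin n → α} :
    z' ∈ cylinder m z ↔ ∀ j : Fin n, (j : ℕ) < m → z' j = z j := by
  simp [cylinder]

lemma self_mem_cylinder (m : ℕ) (z : Fin n → α) : z ∈ cylinder m z :=
  mem_cylinder.2 fun _ _ => rfl

lemma cylinder_zero (z : Fin n → α) : cylinder 0 z = Finset.univ := by
  simp [cylinder]

lemma cylinder_length (z : Fin n → α) : cylinder n z = {z} := by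
  ext z'
  simp [mem_cylinder, funext_iff]

lemma cylinder_congr {m : ℕ} {z z' : Fin n → α} (h : ∀ j : Fin n, (j : ℕ) < m → z j = z' j) :
    cylinder m z = cylinder m z' := by
  ext w
  rw [mem_cylinder, mem_cylinder]
  exact forall₂_congr fun j hj => by rw [h j hj]

lemma cylinder_update (i : Fin n) (z : Fin n → α) (c : α) :
    cylinder i (Function.update z i c) = cylinder i z :=
  cylinder_congr fun _ hj => Function.update_of_ne (Fin.ne_of_lt hj) _ _

lemma cylinder_succ_update (i : Fin n) (z : Fin n → α) (c : α) :
    cylinder (i + 1) (Function.update z i c) = {z' ∈ cylinder i z | z' i = c} := by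
  ext z'
  rw [Finset.mem_filter, ← cylinder_update i z c, mem_cylinder, mem_cylinder]
  simp only [Nat.lt_succ_iff_lt_or_eq, or_imp, forall_and, Fin.val_inj, forall_eq,
    Function.update_self]

lemma sum_sum_cylinder_succ_update (f : (Fin n → α) → ℝ) (i : Fin n) (z : Fin n → α) :
    ∑ c, ∑ z' ∈ cylinder (i + 1) (Function.update z i c), f z' = ∑ z' ∈ cylinder i z, f z' := by
  simp only [cylinder_succ_update]
  exact Finset.sum_fiberwise _ _ _

end Cylinder

section PrefixMarginal

variable {n : ℕ} {X Y : Type*} [Fintype X] [DecidableEq X] [Fintype Y] [DecidableEq Y]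
  {P : (Fin n → X) → (Fin n → Y) → ℝ}

/-- The probability `P(xᵃ, yᵇ)` of the first `a` letters of `x` and the first `b` letters of `y`
under the joint weight `P`. -/
def prefixMarginal (P : (Fin n → X) → (Fin n → Y) → ℝ) (a b : ℕ) (x : Fin n → X)
    (y : Fin n → Y) : ℝ :=
  ∑ x' ∈ cylinder a x, ∑ y' ∈ cylinder b y, P x' y'

lemma prefixMarginal_nonneg (hP : ∀ x y, 0 ≤ P x y) (a b : ℕ) (x : Fin n → X) (y : Fin n → Y) :
    0 ≤ prefixMarginal P a b x y :=
  Finset.sum_nonneg fun x' _ => Finset.sum_nonneg fun y' _ => hP x' y'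

lemma prefixMarginal_pos (hP : ∀ x y, 0 ≤ P x y) (a b : ℕ) {x : Fin n → X} {y : Fin n → Y}
    (hxy : 0 < P x y) : 0 < prefixMarginal P a b x y :=
  Finset.sum_pos' (fun x' _ => Finset.sum_nonneg fun y' _ => hP x' y')
    ⟨x, self_mem_cylinder a x,
      Finset.sum_pos' (fun y' _ => hP x y') ⟨y, self_mem_cylinder b y, hxy⟩⟩

lemma prefixMarginal_zero_zero (x : Fin n → X) (y : Fin n → Y) :
    prefixMarginal P 0 0 x y = ∑ x', ∑ y', P x' y' := by
  simp only [prefixMarginal, cylinder_zero]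

lemma prefixMarginal_length_length (x : Fin n → X) (y : Fin n → Y) :
    prefixMarginal P n n x y = P x y := by
  simp only [prefixMarginal, cylinder_length, Finset.sum_singleton]

lemma dependsOn_prefixMarginal_left (P : (Fin n → X) → (Fin n → Y) → ℝ) (a b : ℕ)
    (y : Fin n → Y) : DependsOn (prefixMarginal P a b · y) {j | (j : ℕ) < a} :=
  fun x x' h => by simp only [prefixMarginal, cylinder_congr h]

lemma dependsOn_prefixMarginal_right (P : (Fin n → X) → (Fin n → Y) → ℝ) (a b : ℕ)
    (x : Fin n → X) : DependsOn (prefixMarginal P a b x) {j | (j : ℕ) < b} :=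
  fun y y' h => by simp only [prefixMarginal, cylinder_congr h]

lemma sum_prefixMarginal_update_left (P : (Fin n → X) → (Fin n → Y) → ℝ) (i : Fin n) (b : ℕ)
    (x : Fin n → X) (y : Fin n → Y) :
    ∑ c, prefixMarginal P (i + 1) b (Function.update x i c) y = prefixMarginal P i b x y :=
  sum_sum_cylinder_succ_update _ i x

lemma sum_prefixMarginal_update_right (P : (Fin n → X) → (Fin n → Y) → ℝ) (a : ℕ) (i : Fin n)
    (x : Fin n → X) (y : Fin n → Y) :
    ∑ c, prefixMarginal P a (i + 1) x (Function.update y i c) = prefixMarginal P a i x y := by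
  simp only [prefixMarginal]
  rw [Finset.sum_comm]
  exact Finset.sum_congr rfl fun x' _ => sum_sum_cylinder_succ_update _ i y

end PrefixMarginal

section Kernels

variable {n : ℕ} {X Y : Type*} [Fintype X] [DecidableEq X] [Fintype Y] [DecidableEq Y]
  {P Q : (Fin n → X) → (Fin n → Y) → ℝ}

/-- The conditional probability `P(yᵢ | xⁱ⁻¹, yⁱ⁻¹)`; it is `0` if the past has probability
`0`. -/
def forwardFactor (P : (Fin n → X) → (Fin n → Y) → ℝ) (i : Fin n) (x : Fin n → X)
    (y : Fin n → Y) : ℝ :=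
  prefixMarginal P i (i + 1) x y / prefixMarginal P i i x y

/-- The conditional probability `P(xᵢ | xⁱ⁻¹, yⁱ)`; it is `0` if the past has probability `0`. -/
def backwardFactor (P : (Fin n → X) → (Fin n → Y) → ℝ) (i : Fin n) (x : Fin n → X)
    (y : Fin n → Y) : ℝ :=
  prefixMarginal P (i + 1) (i + 1) x y / prefixMarginal P i (i + 1) x y

/-- The causal conditioning `P(yⁿ‖xⁿ⁻¹)` of a joint weight `P`, a version of `causalCond` in which
the joint weight is not split into a source and a conditional pmf. -/
def forwardKernel (P : (Fin n → X) → (Fin n → Y) → ℝ) (x : Fin n → X) (y : Fin n → Y) : ℝ :=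
  ∏ i, forwardFactor P i x y

/-- The causal conditioning `P(xⁿ‖yⁿ)`, complementary to `forwardKernel` in the chain rule for
`P`. -/
def backwardKernel (P : (Fin n → X) → (Fin n → Y) → ℝ) (x : Fin n → X) (y : Fin n → Y) : ℝ :=
  ∏ i, backwardFactor P i x y

lemma forwardFactor_nonneg (hP : ∀ x y, 0 ≤ P x y) (i : Fin n) (x : Fin n → X) (y : Fin n → Y) :
    0 ≤ forwardFactor P i x y :=
  div_nonneg (prefixMarginal_nonneg hP _ _ _ _) (prefixMarginal_nonneg hP _ _ _ _)

lemma backwardFactor_nonneg (hP : ∀ x y, 0 ≤ P x y) (i : Fin n) (x : Fin n → X)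
    (y : Fin n → Y) : 0 ≤ backwardFactor P i x y :=
  div_nonneg (prefixMarginal_nonneg hP _ _ _ _) (prefixMarginal_nonneg hP _ _ _ _)

lemma dependsOn_forwardFactor_left (P : (Fin n → X) → (Fin n → Y) → ℝ) (i : Fin n)
    (y : Fin n → Y) : DependsOn (forwardFactor P i · y) (Set.Iio i) := fun _ _ h =>
  congrArg₂ (· / ·) (dependsOn_prefixMarginal_left P _ _ y h)
    (dependsOn_prefixMarginal_left P _ _ y h)

lemma dependsOn_forwardFactor_right (P : (Fin n → X) → (Fin n → Y) → ℝ) (i : Fin n)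
    (x : Fin n → X) : DependsOn (forwardFactor P i x) (Set.Iic i) := fun _ _ h =>
  congrArg₂ (· / ·)
    (dependsOn_prefixMarginal_right P _ _ x fun j hj => h j (Nat.lt_succ_iff.1 hj))
    (dependsOn_prefixMarginal_right P _ _ x fun j hj => h j (Nat.le_of_lt hj))

lemma dependsOn_backwardFactor_left (P : (Fin n → X) → (Fin n → Y) → ℝ) (i : Fin n)
    (y : Fin n → Y) : DependsOn (backwardFactor P i · y) (Set.Iic i) := fun _ _ h =>
  congrArg₂ (· / ·)
    (dependsOn_prefixMarginal_left P _ _ y fun j hj => h j (Nat.lt_succ_iff.1 hj))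
    (dependsOn_prefixMarginal_left P _ _ y fun j hj => h j (Nat.le_of_lt hj))

lemma dependsOn_backwardFactor_right (P : (Fin n → X) → (Fin n → Y) → ℝ) (i : Fin n)
    (x : Fin n → X) : DependsOn (backwardFactor P i x) (Set.Iic i) := fun _ _ h =>
  congrArg₂ (· / ·)
    (dependsOn_prefixMarginal_right P _ _ x fun j hj => h j (Nat.lt_succ_iff.1 hj))
    (dependsOn_prefixMarginal_right P _ _ x fun j hj => h j (Nat.lt_succ_iff.1 hj))

lemma sum_forwardFactor_update_le_one (P : (Fin n → X) → (Fin n → Y) → ℝ) (i : Fin n)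
    (x : Fin n → X) (y : Fin n → Y) : ∑ c, forwardFactor P i x (Function.update y i c) ≤ 1 := by
  have hpast (c : Y) : prefixMarginal P i i x (Function.update y i c) = prefixMarginal P i i x y :=
    dependsOn_prefixMarginal_right P _ _ x fun j hj => Function.update_of_ne (Fin.ne_of_lt hj) _ _
  simp only [forwardFactor, hpast]
  rw [← Finset.sum_div, sum_prefixMarginal_update_right]
  exact div_self_le_one _

lemma sum_backwardFactor_update_le_one (P : (Fin n → X) → (Fin n → Y) → ℝ) (i : Fin n)
    (x : Fin n → X) (y : Fin n → Y) : ∑ c, backwardFactor P i (Function.update x i c) y ≤ 1 := by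
  have hpast (c : X) :
      prefixMarginal P i (i + 1) (Function.update x i c) y = prefixMarginal P i (i + 1) x y :=
    dependsOn_prefixMarginal_left P _ _ y fun j hj => Function.update_of_ne (Fin.ne_of_lt hj) _ _
  simp only [backwardFactor, hpast]
  rw [← Finset.sum_div, sum_prefixMarginal_update_left]
  exact div_self_le_one _

lemma forwardKernel_nonneg (hP : ∀ x y, 0 ≤ P x y) (x : Fin n → X) (y : Fin n → Y) :
    0 ≤ forwardKernel P x y :=
  Finset.prod_nonneg fun i _ => forwardFactor_nonneg hP i x y

lemma backwardKernel_nonneg (hP : ∀ x y, 0 ≤ P x y) (x : Fin n → X) (y : Fin n → Y) :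
    0 ≤ backwardKernel P x y :=
  Finset.prod_nonneg fun i _ => backwardFactor_nonneg hP i x y

lemma forwardKernel_pos (hP : ∀ x y, 0 ≤ P x y) {x : Fin n → X} {y : Fin n → Y}
    (hxy : 0 < P x y) : 0 < forwardKernel P x y :=
  Finset.prod_pos fun _ _ =>
    div_pos (prefixMarginal_pos hP _ _ hxy) (prefixMarginal_pos hP _ _ hxy)

lemma backwardKernel_pos (hP : ∀ x y, 0 ≤ P x y) {x : Fin n → X} {y : Fin n → Y}
    (hxy : 0 < P x y) : 0 < backwardKernel P x y :=
  Finset.prod_pos fun _ _ =>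
    div_pos (prefixMarginal_pos hP _ _ hxy) (prefixMarginal_pos hP _ _ hxy)

lemma sum_forwardKernel_le_one (hP : ∀ x y, 0 ≤ P x y) (x : Fin n → X) :
    ∑ y, forwardKernel P x y ≤ 1 :=
  sum_prod_le_one (fun i y => forwardFactor_nonneg hP i x y)
    (fun i => dependsOn_forwardFactor_right P i x)
    (fun i y => sum_forwardFactor_update_le_one P i x y)

lemma sum_forwardKernel_mul_backwardKernel_le_one (hP : ∀ x y, 0 ≤ P x y)
    (hQ : ∀ x y, 0 ≤ Q x y) : ∑ x, ∑ y, forwardKernel P x y * backwardKernel Q x y ≤ 1 :=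
  sum_prod_mul_prod_le_one (forwardFactor_nonneg hP) (backwardFactor_nonneg hQ)
    (dependsOn_forwardFactor_left P) (dependsOn_forwardFactor_right P)
    (dependsOn_backwardFactor_left Q) (dependsOn_backwardFactor_right Q)
    (sum_forwardFactor_update_le_one P) (sum_backwardFactor_update_le_one Q)

lemma forwardKernel_mul_backwardKernel (hP : ∀ x y, 0 ≤ P x y) (hmass : ∑ x, ∑ y, P x y = 1)
    {x : Fin n → X} {y : Fin n → Y} (hxy : 0 < P x y) :
    forwardKernel P x y * backwardKernel P x y = P x y := by
  have hne (a b : ℕ) : prefixMarginal P a b x y ≠ 0 := (prefixMarginal_pos hP a b hxy).ne'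
  calc forwardKernel P x y * backwardKernel P x y
      = ∏ i : Fin n, prefixMarginal P (i + 1) (i + 1) x y / prefixMarginal P i i x y := by
        rw [forwardKernel, backwardKernel, ← Finset.prod_mul_distrib]
        exact Finset.prod_congr rfl fun i _ => div_mul_div_cancel₀' (hne i (i + 1)) _ _
    _ = ∏ i ∈ Finset.range n, prefixMarginal P (i + 1) (i + 1) x y / prefixMarginal P i i x y :=
        Fin.prod_univ_eq_prod_range
          (fun i => prefixMarginal P (i + 1) (i + 1) x y / prefixMarginal P i i x y) n
    _ = prefixMarginal P n n x y :=
        Finset.prod_range_induction _ (fun m => prefixMarginal P m m x y)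
          (by rw [prefixMarginal_zero_zero, hmass])
          n fun m _ => (mul_div_cancel₀ _ (hne m m)).symm
    _ = P x y := prefixMarginal_length_length x y

lemma relEntropy_forwardKernel_mul_backwardKernel_nonneg {R : (Fin n → X) → (Fin n → Y) → ℝ}
    (hR : ∀ x y, 0 ≤ R x y) (hmass : ∑ x, ∑ y, R x y = 1) (hP : ∀ x y, 0 ≤ P x y)
    (hQ : ∀ x y, 0 ≤ Q x y) (hRP : ∀ x y, 0 < R x y → 0 < P x y)
    (hRQ : ∀ x y, 0 < R x y → 0 < Q x y) :
    0 ≤ relEntropy R fun x y => forwardKernel P x y * backwardKernel Q x y :=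
  relEntropy_nonneg hR
    (fun x y => mul_nonneg (forwardKernel_nonneg hP x y) (backwardKernel_nonneg hQ x y))
    (fun x y hxy =>
      mul_pos (forwardKernel_pos hP (hRP x y hxy)) (backwardKernel_pos hQ (hRQ x y hxy)))
    ((sum_forwardKernel_mul_backwardKernel_le_one hP hQ).trans_eq hmass.symm)

lemma relEntropy_eq_add_forwardKernel_backwardKernel (hP : ∀ x y, 0 ≤ P x y)
    (hPmass : ∑ x, ∑ y, P x y = 1) (hQ : ∀ x y, 0 < Q x y) (hQmass : ∑ x, ∑ y, Q x y = 1) :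
    relEntropy P Q = relEntropy P (fun x y => forwardKernel Q x y * backwardKernel P x y) +
      relEntropy P (fun x y => forwardKernel P x y * backwardKernel Q x y) := by
  have hQ' x y := (hQ x y).le
  simp only [relEntropy, ← Finset.sum_add_distrib, ← mul_add]
  refine Finset.sum_congr rfl fun x _ => Finset.sum_congr rfl fun y _ => ?_
  rcases (hP x y).eq_or_lt with hxy | hxy
  · simp [← hxy]
  have hFP := (forwardKernel_pos hP hxy).ne'
  have hBP := (backwardKernel_pos hP hxy).ne'
  have hFQ := (forwardKernel_pos hQ' (hQ x y)).ne'
  have hBQ := (backwardKernel_pos hQ' (hQ x y)).ne'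
  congr 1
  rw [← Real.logb_mul (div_ne_zero hxy.ne' (mul_ne_zero hFQ hBP))
    (div_ne_zero hxy.ne' (mul_ne_zero hFP hBQ))]
  congr 1
  have hQxy := forwardKernel_mul_backwardKernel hQ' hQmass (hQ x y)
  have hPxy := forwardKernel_mul_backwardKernel hP hPmass hxy
  rw [← hQxy, ← hPxy]
  field_simp

end Kernels

section Joint

variable {α β : Type*}

/-- The joint weight `p(a) r(b | a)`. -/
def joint (p : α → ℝ) (r : α → β → ℝ) (a : α) (b : β) : ℝ :=
  p a * r a b

lemma joint_nonneg {p : α → ℝ} {r : α → β → ℝ} (hp : ∀ a, 0 ≤ p a) (hr : ∀ a b, 0 ≤ r a b)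
    (a : α) (b : β) : 0 ≤ joint p r a b :=
  mul_nonneg (hp a) (hr a b)

lemma joint_pos {p : α → ℝ} {r : α → β → ℝ} (hp : ∀ a, 0 < p a) (hr : ∀ a b, 0 < r a b)
    (a : α) (b : β) : 0 < joint p r a b :=
  mul_pos (hp a) (hr a b)

lemma sum_joint [Fintype α] [Fintype β] (p : α → ℝ) {r : α → β → ℝ}
    (hr : ∀ a, ∑ b, r a b = 1) : ∑ a, ∑ b, joint p r a b = ∑ a, p a := by
  simp only [joint, ← Finset.mul_sum, hr, mul_one]

end Joint

section Tilt

variable {α β : Type*} [Fintype β] {q : α → β → ℝ}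

/-- The normalizing constant of `tilt lam d q x`. -/
def partitionSum (lam : ℝ) (d q : α → β → ℝ) (x : α) : ℝ :=
  ∑ y, q x y * 2 ^ (-(lam * d x y))

/-- The kernel `q` reweighted by `2^(-λ d)` and normalized: the update `q ↦ r` of the iteration. -/
def tilt (lam : ℝ) (d q : α → β → ℝ) (x : α) (y : β) : ℝ :=
  q x y * 2 ^ (-(lam * d x y)) / partitionSum lam d q x

variable [Nonempty β] (lam : ℝ) (d : α → β → ℝ)

lemma partitionSum_pos (hq : ∀ x y, 0 < q x y) (x : α) : 0 < partitionSum lam d q x :=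
  Finset.sum_pos (fun y _ => mul_pos (hq x y) (Real.rpow_pos_of_pos two_pos _))
    Finset.univ_nonempty

lemma tilt_pos (hq : ∀ x y, 0 < q x y) (x : α) (y : β) : 0 < tilt lam d q x y :=
  div_pos (mul_pos (hq x y) (Real.rpow_pos_of_pos two_pos _)) (partitionSum_pos lam d hq x)

lemma sum_tilt (hq : ∀ x y, 0 < q x y) (x : α) : ∑ y, tilt lam d q x y = 1 := by
  simp only [tilt, ← Finset.sum_div]
  exact div_self (partitionSum_pos lam d hq x).ne'

lemma logb_tilt (hq : ∀ x y, 0 < q x y) (x : α) (y : β) :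
    Real.logb 2 (tilt lam d q x y) =
      Real.logb 2 (q x y) - lam * d x y - Real.logb 2 (partitionSum lam d q x) := by
  have hpow : (0 : ℝ) < 2 ^ (-(lam * d x y)) := Real.rpow_pos_of_pos two_pos _
  rw [tilt, Real.logb_div (mul_pos (hq x y) hpow).ne' (partitionSum_pos lam d hq x).ne',
    Real.logb_mul (hq x y).ne' hpow.ne', Real.logb_rpow two_pos (by norm_num)]
  ring

end Tilt

section Lagrangian

variable {X Y : Type} [Fintype Y] {n : ℕ} {p : (Fin n → X) → ℝ} {lam : ℝ}
  {d r q : (Fin n → X) → (Fin n → Y) → ℝ}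

lemma isCondPMF_tilt [Nonempty Y] (lam : ℝ) (d : (Fin n → X) → (Fin n → Y) → ℝ)
    (hq : ∀ x y, 0 < q x y) : IsCondPMF (tilt lam d q) :=
  ⟨fun x y => (tilt_pos lam d hq x y).le, sum_tilt lam d hq⟩

variable [Fintype X]

/-- The functional `K(r, q) = I_FF(r, q) + λ E_r[d]` that the iteration minimizes alternately in
`r` and in `q`. -/
def lagrangian (p : (Fin n → X) → ℝ) (lam : ℝ) (d r q : (Fin n → X) → (Fin n → Y) → ℝ) : ℝ :=
  IFF p r q + lam * ∑ x, ∑ y, p x * r x y * d x y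

lemma IFF_eq_relEntropy (hp : ∀ x, 0 < p x) (r q : (Fin n → X) → (Fin n → Y) → ℝ) :
    IFF p r q = relEntropy (joint p r) (joint p q) := by
  simp only [IFF, relEntropy, joint, mul_div_mul_left _ _ (hp _).ne']

lemma lagrangian_eq_sum (p : (Fin n → X) → ℝ) (lam : ℝ)
    (d r q : (Fin n → X) → (Fin n → Y) → ℝ) :
    lagrangian p lam d r q =
      ∑ x, ∑ y, joint p r x y * (Real.logb 2 (r x y / q x y) + lam * d x y) := by
  simp only [lagrangian, IFF, joint, Finset.mul_sum, ← Finset.sum_add_distrib]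
  exact Finset.sum_congr rfl fun x _ => Finset.sum_congr rfl fun y _ => by ring

lemma lagrangian_sub_relEntropy_tilt [Nonempty Y] (hp : ∀ x, 0 < p x) (hr : IsCondPMF r)
    (hq : ∀ x y, 0 < q x y) :
    lagrangian p lam d r q - relEntropy (joint p r) (joint p (tilt lam d q)) =
      -∑ x, p x * Real.logb 2 (partitionSum lam d q x) := by
  have hterm (x : Fin n → X) (y : Fin n → Y) :
      joint p r x y * (Real.logb 2 (r x y / q x y) + lam * d x y) -
          joint p r x y * Real.logb 2 (joint p r x y / joint p (tilt lam d q) x y) =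
        r x y * -(p x * Real.logb 2 (partitionSum lam d q x)) := by
    rcases (hr.1 x y).eq_or_lt with hxy | hxy
    · simp [joint, ← hxy]
    · rw [joint, joint, mul_div_mul_left _ _ (hp x).ne',
        Real.logb_div hxy.ne' (hq x y).ne', Real.logb_div hxy.ne' (tilt_pos lam d hq x y).ne',
        logb_tilt lam d hq]
      ring
  simp only [lagrangian_eq_sum, relEntropy, ← Finset.sum_sub_distrib, hterm, ← Finset.sum_mul,
    hr.2, one_mul, Finset.sum_neg_distrib]

lemma lagrangian_eq_lagrangian_tilt_add [Nonempty Y] (hp : ∀ x, 0 < p x) (hr : IsCondPMF r)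
    (hq : ∀ x y, 0 < q x y) :
    lagrangian p lam d r q =
      lagrangian p lam d (tilt lam d q) q + relEntropy (joint p r) (joint p (tilt lam d q)) := by
  have hvalue := lagrangian_sub_relEntropy_tilt (lam := lam) (d := d) hp hr hq
  rw [← lagrangian_sub_relEntropy_tilt hp (isCondPMF_tilt lam d hq) hq, relEntropy_self,
    sub_zero] at hvalue
  exact sub_eq_iff_eq_add.1 hvalue

lemma lagrangian_tilt_le [Nonempty Y] (hp : ∀ x, 0 < p x) (hr : IsCondPMF r)
    (hq : ∀ x y, 0 < q x y) : lagrangian p lam d (tilt lam d q) q ≤ lagrangian p lam d r q := by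
  rw [lagrangian_eq_lagrangian_tilt_add hp hr hq]
  have htilt := isCondPMF_tilt lam d hq
  refine le_add_of_nonneg_right (relEntropy_nonneg (joint_nonneg (fun x => (hp x).le) hr.1)
    (joint_nonneg (fun x => (hp x).le) htilt.1)
    (fun x y _ => joint_pos hp (tilt_pos lam d hq) x y) ?_)
  rw [sum_joint p hr.2, sum_joint p htilt.2]

variable [DecidableEq X] [DecidableEq Y]

lemma causalCond_eq_forwardKernel (p : (Fin n → X) → ℝ) (r : (Fin n → X) → (Fin n → Y) → ℝ) :
    causalCond p r = forwardKernel (joint p r) := by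
  ext x y
  simp only [causalCond, forwardKernel, forwardFactor, prefixMarginal, joint, cylinder,
    Finset.sum_filter, ite_and, Finset.sum_ite_irrel, Finset.sum_const_zero, Fin.lt_def,
    Fin.le_def, Nat.lt_succ_iff]

lemma lagrangian_eq_lagrangian_causalCond_add (hp : IsPMF p) (hr : IsCondPMF r)
    (hq : ∀ x y, 0 < q x y) :
    lagrangian p lam d r q = lagrangian p lam d r (causalCond p r) +
      relEntropy (joint p r) (fun x y => q x y * backwardKernel (joint p r) x y) := by
  have hP := joint_nonneg hp.1 hr.1
  have hmass := (sum_joint p hr.2).trans hp.2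
  simp only [lagrangian_eq_sum, relEntropy, ← Finset.sum_add_distrib, ← mul_add,
    causalCond_eq_forwardKernel]
  refine Finset.sum_congr rfl fun x _ => Finset.sum_congr rfl fun y _ => ?_
  rcases (hP x y).eq_or_lt with hxy | hxy
  · simp [← hxy]
  have hrxy : 0 < r x y := pos_of_mul_pos_right hxy (hp.1 x)
  have hF := (forwardKernel_pos hP hxy).ne'
  have hratio : joint p r x y / (q x y * backwardKernel (joint p r) x y) =
      forwardKernel (joint p r) x y / q x y := by
    conv_lhs => rw [← forwardKernel_mul_backwardKernel hP hmass hxy]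
    exact mul_div_mul_right _ _ (backwardKernel_pos hP hxy).ne'
  rw [hratio, Real.logb_div hrxy.ne' (hq x y).ne', Real.logb_div hrxy.ne' hF,
    Real.logb_div hF (hq x y).ne']
  ring

/-- The Lyapunov function of the iteration: `D(P ‖ q · backward P)`, where `P` is the joint weight
of a fixed competitor `r` and `q` is the current causal kernel. -/
def potential (p : (Fin n → X) → ℝ) (r q : (Fin n → X) → (Fin n → Y) → ℝ) : ℝ :=
  relEntropy (joint p r) fun x y => q x y * backwardKernel (joint p r) x y

lemma causalCond_pos (hp : ∀ x, 0 < p x) (hr : ∀ x y, 0 < r x y) (x : Fin n → X)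
    (y : Fin n → Y) : 0 < causalCond p r x y := by
  rw [causalCond_eq_forwardKernel]
  exact forwardKernel_pos (fun x y => (joint_pos hp hr x y).le) (joint_pos hp hr x y)

lemma potential_causalCond_nonneg {s : (Fin n → X) → (Fin n → Y) → ℝ} (hp : IsPMF p)
    (hppos : ∀ x, 0 < p x) (hr : IsCondPMF r) (hs : ∀ x y, 0 < s x y) :
    0 ≤ potential p r (causalCond p s) := by
  have hjs := joint_pos hppos hs
  have hjr := joint_nonneg hp.1 hr.1
  rw [potential, causalCond_eq_forwardKernel]
  exact relEntropy_forwardKernel_mul_backwardKernel_nonneg hjr ((sum_joint p hr.2).trans hp.2)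
    (fun x y => (hjs x y).le) hjr (fun x y _ => hjs x y) (fun _ _ h => h)

lemma lagrangian_causalCond_le {s : (Fin n → X) → (Fin n → Y) → ℝ} (hp : IsPMF p)
    (hppos : ∀ x, 0 < p x) (hr : IsCondPMF r) (hs : ∀ x y, 0 < s x y) :
    lagrangian p lam d r (causalCond p r) ≤ lagrangian p lam d r (causalCond p s) := by
  rw [lagrangian_eq_lagrangian_causalCond_add hp hr (causalCond_pos hppos hs)]
  exact le_add_of_nonneg_right (potential_causalCond_nonneg hp hppos hr hs)

lemma potential_causalCond_le_relEntropy {s : (Fin n → X) → (Fin n → Y) → ℝ} (hp : IsPMF p)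
    (hppos : ∀ x, 0 < p x) (hr : IsCondPMF r) (hs : IsCondPMF s) (hspos : ∀ x y, 0 < s x y) :
    potential p r (causalCond p s) ≤ relEntropy (joint p r) (joint p s) := by
  have hjs := joint_pos hppos hspos
  have hjr := joint_nonneg hp.1 hr.1
  have hmass := (sum_joint p hr.2).trans hp.2
  rw [potential, causalCond_eq_forwardKernel, relEntropy_eq_add_forwardKernel_backwardKernel hjr
    hmass hjs ((sum_joint p hs.2).trans hp.2)]
  exact le_add_of_nonneg_right (relEntropy_forwardKernel_mul_backwardKernel_nonneg hjr hmass hjr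
    (fun x y => (hjs x y).le) (fun _ _ h => h) fun x y _ => hjs x y)

lemma lagrangian_tilt_sub_le_potential_sub [Nonempty Y] (hp : IsPMF p) (hppos : ∀ x, 0 < p x)
    (hr : IsCondPMF r) (hq : ∀ x y, 0 < q x y) :
    lagrangian p lam d (tilt lam d q) q - lagrangian p lam d r (causalCond p r) ≤
      potential p r q - potential p r (causalCond p (tilt lam d q)) := by
  have htilt := lagrangian_eq_lagrangian_tilt_add (lam := lam) (d := d) hppos hr hq
  have hcausal : lagrangian p lam d r q =
      lagrangian p lam d r (causalCond p r) + potential p r q :=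
    lagrangian_eq_lagrangian_causalCond_add hp hr hq
  have hpotential := potential_causalCond_le_relEntropy hp hppos hr
    (isCondPMF_tilt lam d hq) (tilt_pos lam d hq)
  linarith

lemma directedInfo_nonneg (hp : IsPMF p) (hppos : ∀ x, 0 < p x) (hr : IsCondPMF r) :
    0 ≤ directedInfo p r := by
  have hjr := joint_nonneg hp.1 hr.1
  have hIFF : directedInfo p r = relEntropy (joint p r) (joint p (forwardKernel (joint p r))) := by
    rw [← IFF_eq_relEntropy hppos, ← causalCond_eq_forwardKernel]
    rfl
  rw [hIFF]
  refine relEntropy_nonneg hjr (joint_nonneg hp.1 (forwardKernel_nonneg hjr))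
    (fun x y hxy => mul_pos (hppos x) (forwardKernel_pos hjr hxy)) ?_
  rw [sum_joint p hr.2]
  refine Finset.sum_le_sum fun x _ => ?_
  simp only [joint, ← Finset.mul_sum]
  exact mul_le_of_le_one_right (hp.1 x) (sum_forwardKernel_le_one hjr x)

lemma bddBelow_lagrangian_causalCond (hp : IsPMF p) (hppos : ∀ x, 0 < p x) (lam : ℝ)
    (d : (Fin n → X) → (Fin n → Y) → ℝ) :
    BddBelow {v | ∃ r, IsCondPMF r ∧ v = lagrangian p lam d r (causalCond p r)} := by
  refine ⟨∑ x, ∑ y, -(p x * |lam * d x y|), ?_⟩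
  rintro _ ⟨r, hr, rfl⟩
  have hr_le_one (x : Fin n → X) (y : Fin n → Y) : r x y ≤ 1 :=
    (Finset.single_le_sum (fun y _ => hr.1 x y) (Finset.mem_univ y)).trans_eq (hr.2 x)
  calc ∑ x, ∑ y, -(p x * |lam * d x y|)
      ≤ ∑ x, ∑ y, p x * (r x y * (lam * d x y)) := by
        refine Finset.sum_le_sum fun x _ => Finset.sum_le_sum fun y _ => ?_
        rw [← mul_neg]
        refine mul_le_mul_of_nonneg_left (neg_le_of_abs_le ?_) (hp.1 x)
        rw [abs_mul, abs_of_nonneg (hr.1 x y)]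
        exact mul_le_of_le_one_left (abs_nonneg _) (hr_le_one x y)
    _ = lam * ∑ x, ∑ y, p x * r x y * d x y := by
        simp only [Finset.mul_sum]
        exact Finset.sum_congr rfl fun x _ => Finset.sum_congr rfl fun y _ => by ring
    _ ≤ lagrangian p lam d r (causalCond p r) :=
        le_add_of_nonneg_left (directedInfo_nonneg hp hppos hr)

end Lagrangian

end FFRD

open FFRD in
theorem BA_iteration_converges_general
    {X Y : Type} [Fintype X] [DecidableEq X] [Fintype Y] [Nonempty Y] [DecidableEq Y] {n : ℕ}
    {p : (Fin n → X) → ℝ} (hp : IsPMF p) (hppos : ∀ x, 0 < p x)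
    (lam : ℝ) (d : (Fin n → X) → (Fin n → Y) → ℝ)
    {r q : ℕ → (Fin n → X) → (Fin n → Y) → ℝ}
    (hq0 : ∀ x y, 0 < q 0 x y)
    (hr : ∀ k, r (k + 1) = tilt lam d (q k))
    (hq : ∀ k, q (k + 1) = causalCond p (r (k + 1))) :
    Tendsto (fun k => lagrangian p lam d (r k) (q k)) atTop
      (nhds (sInf {v | ∃ r', IsCondPMF r' ∧ v = lagrangian p lam d r' (causalCond p r')})) := by
  have hqpos (k : ℕ) : ∀ x y, 0 < q k x y := by
    induction k with
    | zero => exact hq0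
    | succ k ih => rw [hq, hr]; exact causalCond_pos hppos (tilt_pos lam d ih)
  have hrpos (k : ℕ) : ∀ x y, 0 < r (k + 1) x y := hr k ▸ tilt_pos lam d (hqpos k)
  have hrpmf (k : ℕ) : IsCondPMF (r (k + 1)) := hr k ▸ isCondPMF_tilt lam d (hqpos k)
  have hstep_q (k : ℕ) : lagrangian p lam d (r (k + 2)) (q (k + 2)) ≤
      lagrangian p lam d (r (k + 2)) (q (k + 1)) := by
    rw [hq (k + 1), hq k]
    exact lagrangian_causalCond_le hp hppos (hrpmf (k + 1)) (hrpos k)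
  have hstep_r (k : ℕ) : lagrangian p lam d (r (k + 2)) (q (k + 1)) ≤
      lagrangian p lam d (r (k + 1)) (q (k + 1)) := by
    rw [hr (k + 1)]
    exact lagrangian_tilt_le hppos (hrpmf k) (hqpos (k + 1))
  -- `q 0` need not be a causal kernel, so the descent argument starts at `q 1`.
  rw [← tendsto_add_atTop_iff_nat 2]
  refine tendsto_sInf_of_sub_le_potential_sub
    (antitone_nat_of_succ_le fun k => (hstep_q (k + 1)).trans (hstep_r (k + 1)))
    (bddBelow_lagrangian_causalCond hp hppos lam d)
    (fun k => ⟨r (k + 2), hrpmf (k + 1), by rw [hq (k + 1)]⟩) ?_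
  rintro _ ⟨r', hr', rfl⟩
  refine ⟨fun k => potential p r' (q (k + 1)), fun k => ?_, fun k => ?_⟩
  · beta_reduce
    rw [hq k]
    exact potential_causalCond_nonneg hp hppos hr' (hrpos k)
  · refine (sub_le_sub_right (hstep_q k) _).trans ?_
    beta_reduce
    rw [hq (k + 1), hr (k + 1)]
    exact lagrangian_tilt_sub_le_potential_sub hp hppos hr' (hqpos (k + 1))

open FFRD in
/-- Theorem 4: the Blahut–Arimoto-type iteration started from the uniform
causal conditioning pmf converges: `K(r^k,q^k)` tends to
`min_r [ I(X̂ⁿ→Xⁿ) + λ·E_r[d] ]`. -/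
theorem BA_iteration_converges
    {X Y : Type} [Fintype X] [DecidableEq X] [Fintype Y] [Nonempty Y] [DecidableEq Y]
    (n : ℕ)
    (p : (Fin n → X) → ℝ) (hp : IsPMF p) (hppos : ∀ x, 0 < p x)
    (lam : ℝ) (hlam : 0 ≤ lam)
    (d : (Fin n → X) → (Fin n → Y) → ℝ) (hd : ∀ x y, 0 ≤ d x y)
    (r : ℕ → (Fin n → X) → (Fin n → Y) → ℝ)
    (q : ℕ → (Fin n → X) → (Fin n → Y) → ℝ)
    (hq0 : ∀ x y, q 0 x y = (1 / (Fintype.card Y : ℝ)) ^ n)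
    (hr : ∀ k, 1 ≤ k → ∀ x y, r k x y =
      q (k - 1) x y * 2 ^ (-(lam * d x y)) /
        ∑ y', q (k - 1) x y' * 2 ^ (-(lam * d x y')))
    (hqk : ∀ k, 1 ≤ k → q k = causalCond p (r k)) :
    Filter.Tendsto
      (fun k => IFF p (r k) (q k) + lam * (∑ x, ∑ y, p x * r k x y * d x y))
      Filter.atTop
      (nhds (sInf {v : ℝ | ∃ r' : (Fin n → X) → (Fin n → Y) → ℝ, IsCondPMF r' ∧
        v = directedInfo p r' + lam * ∑ x, ∑ y, p x * r' x y * d x y})) := by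
  exact BA_iteration_converges_general hp hppos lam d (fun x y => by rw [hq0]; positivity)
    (fun k => by ext x y; exact hr (k + 1) k.succ_pos x y) (fun k => hqk (k + 1) k.succ_pos)
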